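/- For n ∈ ℕ, define v(ξ) = P_n(ξ) e^ξ/ξ + L_n^{(1)}(ξ) E_1(-ξ) for ξ with Re(ξ) < 0, where E_1(ζ) = ∫_1^∞ e^{-tζ}/t dt and P_n(x) = Σ_{k=0}^{n} (-1)^k binom(n+1, k+1) Σ_{m=0}^{k} ((k-m)!/k!) x^m. Then v satisfies the Laguerre differential equation ξ v''(ξ) + (2-ξ) v'(ξ) + n v(ξ) = 0, and v is linearly independent of L_n^{(1)}. -/

import Mathlib

open MeasureTheory Set

/-- The associated Laguerre polynomial L_n^{(β)}(z) = Σ_{k=0}^n (-1)^k C(n+β, n-k) z^k / k!. -/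
noncomputable def laguerre (β n : ℕ) (z : ℂ) : ℂ :=
  ∑ k ∈ Finset.range (n + 1),
    (-1 : ℂ) ^ k * ((n + β).choose (n - k) : ℂ) * z ^ k / (Nat.factorial k : ℂ)

/-- The polynomial P_n(x) = Σ_{k=0}^n (-1)^k C(n+1, k+1) Σ_{m=0}^k ((k-m)!/k!) x^m. -/
noncomputable def Pn (n : ℕ) (x : ℂ) : ℂ :=
  ∑ k ∈ Finset.range (n + 1),
    (-1 : ℂ) ^ k * ((n + 1).choose (k + 1) : ℂ) *
      ∑ m ∈ Finset.range (k + 1),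
        ((Nat.factorial (k - m) : ℂ) / (Nat.factorial k : ℂ)) * x ^ m

/-- The exponential integral E_1(ζ) = ∫_1^∞ e^{-tζ}/t dt. -/
noncomputable def E1 (ζ : ℂ) : ℂ :=
  ∫ t in Ioi (1:ℝ), Complex.exp (-(t : ℂ) * ζ) / (t : ℂ)

/-- The second solution v(ξ) = P_n(ξ) e^ξ/ξ + L_n^{(1)}(ξ) E_1(-ξ) of the Laguerre equation. -/
noncomputable def vsol (n : ℕ) (ξ : ℂ) : ℂ :=
  Pn n ξ * Complex.exp ξ / ξ + laguerre 1 n ξ * E1 (-ξ)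

open Polynomial in
noncomputable def lagQ (k : ℕ) : ℂ[X] :=
  ∑ m ∈ Finset.range (k + 1), C ((Nat.factorial (k - m) : ℂ)) * X ^ m

noncomputable def lagA (n k : ℕ) : ℂ :=
  (-1 : ℂ) ^ k * ((n + 1).choose (k + 1) : ℂ) / (Nat.factorial k : ℂ)

open Polynomial in
noncomputable def lagP (n : ℕ) : ℂ[X] :=
  ∑ k ∈ Finset.range (n + 1), C (lagA n k) * lagQ k

open Polynomial in
noncomputable def lagL (n : ℕ) : ℂ[X] :=
  ∑ k ∈ Finset.range (n + 1), C (lagA n k) * X ^ k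

lemma lagA_succ (n k : ℕ) :
    ((k : ℂ) + 1) * (k + 2) * lagA n (k + 1) = - ((n : ℂ) - k) * lagA n k := by
  have h := Nat.choose_succ_right_eq (n + 1) (k + 1)
  have hk : ((Nat.factorial k : ℂ)) ≠ 0 := by exact_mod_cast Nat.factorial_ne_zero k
  have hk1 : ((k : ℂ) + 1) ≠ 0 := by exact_mod_cast Nat.succ_ne_zero k
  have h' : ((n + 1).choose (k + 2) : ℂ) * (k + 2) = ((n + 1).choose (k + 1) : ℂ) * (n - k) := by
    rcases le_or_gt k n with hkn | hkn
    · have := congrArg (Nat.cast : ℕ → ℂ) h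
      rw [show n + 1 - (k + 1) = n - k by omega] at this
      push_cast [Nat.cast_sub hkn] at this
      rw [← this]; ring
    · rw [Nat.choose_eq_zero_of_lt (show n + 1 < k + 2 by omega),
        Nat.choose_eq_zero_of_lt (show n + 1 < k + 1 by omega)]; simp
  unfold lagA
  rw [Nat.factorial_succ]
  push_cast
  field_simp
  rw [pow_succ, show k + 1 + 1 = k + 2 by rfl]
  linear_combination (-(-1 : ℂ) ^ k) * h'

lemma lagA_zero_of_gt (n k : ℕ) (h : n < k) : lagA n k = 0 := by
  simp [lagA, Nat.choose_eq_zero_of_lt (show n + 1 < k + 1 by omega)]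

lemma lagQ_coeff (k m : ℕ) :
    (lagQ k).coeff m = if m ≤ k then (Nat.factorial (k - m) : ℂ) else 0 := by
  unfold lagQ
  simp [Polynomial.finsetSum_coeff, Polynomial.coeff_X_pow]

lemma lagL_coeff (n m : ℕ) : (lagL n).coeff m = lagA n m := by
  unfold lagL
  simp only [Polynomial.finsetSum_coeff, Polynomial.coeff_C_mul, Polynomial.coeff_X_pow]
  by_cases h : m < n + 1
  · simp [h]
  · simp only [mul_ite, mul_one, mul_zero, Finset.sum_ite_eq, Finset.mem_range, h, if_false]
    rw [lagA_zero_of_gt n m (by omega)]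

lemma laguerre_eq (n : ℕ) (z : ℂ) : laguerre 1 n z = (lagL n).eval z := by
  unfold laguerre lagL lagA
  rw [Polynomial.eval_finsetSum]
  refine Finset.sum_congr rfl fun k hk => ?_
  have : k ≤ n := by simpa [Nat.lt_succ_iff] using hk
  rw [show (n + 1).choose (n - k) = (n + 1).choose (k + 1) from
    Nat.choose_symm_of_eq_add (by omega)]
  simp
  ring

lemma Pn_eq (n : ℕ) (z : ℂ) : Pn n z = (lagP n).eval z := by
  unfold Pn lagP lagA lagQ
  rw [Polynomial.eval_finsetSum]
  refine Finset.sum_congr rfl fun k hk => ?_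
  simp only [Polynomial.eval_mul, Polynomial.eval_C, Polynomial.eval_finsetSum,
    Polynomial.eval_pow, Polynomial.eval_X]
  rw [Finset.mul_sum, Finset.mul_sum]
  refine Finset.sum_congr rfl fun m hm => ?_
  ring

open Polynomial in
lemma lagL_ode (n : ℕ) :
    X * derivative (derivative (lagL n)) + (2 - X) * derivative (lagL n) + C (n : ℂ) * lagL n
      = 0 := by
  ext m
  have h := lagA_succ n m
  rw [sub_mul, show (2 : ℂ[X]) = C (2 : ℂ) from rfl]
  cases m with
  | zero =>
    simp only [coeff_add, coeff_sub, coeff_C_mul, coeff_X_mul_zero, coeff_derivative, lagL_coeff,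
      coeff_zero]
    push_cast at h ⊢
    linear_combination h
  | succ m =>
    simp only [coeff_add, coeff_sub, coeff_C_mul, coeff_X_mul, coeff_derivative, lagL_coeff,
      coeff_zero]
    push_cast at h ⊢
    linear_combination h

open Polynomial in
lemma lagQ_ode (k : ℕ) :
    X * derivative (derivative (lagQ k)) + X * derivative (lagQ k) + C ((k : ℂ) + 1) * lagQ k
      = C (2 * (k : ℂ) + 1) * X ^ k + C ((k : ℂ) * (k + 1)) * lagQ (k - 1) := by
  ext m
  rcases lt_trichotomy m k with h | h | h
  · obtain ⟨j, rfl⟩ : ∃ j, k = m + 1 + j := ⟨k - (m + 1), by omega⟩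
    have e1 : m + 1 + j - (m + 1) = j := by omega
    have e2 : m + 1 + j - m = j + 1 := by omega
    have e3 : m + 1 + j - 1 - m = j := by omega
    cases m with
    | zero =>
      simp only [coeff_add, coeff_C_mul, coeff_X_mul_zero, lagQ_coeff, coeff_X_pow]
      rw [if_pos (by omega), if_neg (by omega), if_pos (by omega), e2, e3, Nat.factorial_succ]
      push_cast
      ring
    | succ m =>
      simp only [coeff_add, coeff_C_mul, coeff_X_mul, coeff_derivative, lagQ_coeff, coeff_X_pow]
      rw [if_pos (by omega), if_pos (by omega), if_neg (by omega), if_pos (by omega), e1, e2, e3,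
        Nat.factorial_succ]
      push_cast
      ring
  · subst h
    cases m with
    | zero => simp [lagQ_coeff]
    | succ m =>
      simp only [coeff_add, coeff_C_mul, coeff_X_mul, coeff_derivative, lagQ_coeff, coeff_X_pow]
      have c1 : ¬ (m + 1 + 1 ≤ m + 1) := by omega
      have c2 : ¬ (m + 1 ≤ m + 1 - 1) := by omega
      simp only [c1, c2, if_false, le_refl, if_true, Nat.sub_self, Nat.factorial_zero]
      push_cast
      ring
  · obtain ⟨m, rfl⟩ : ∃ j, m = j + 1 := ⟨m - 1, by omega⟩
    simp only [coeff_add, coeff_C_mul, coeff_X_mul, coeff_derivative, lagQ_coeff, coeff_X_pow]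
    rw [if_neg (by omega), if_neg (by omega), if_neg (by omega), if_neg (by omega)]
    simp

open Polynomial in
lemma lagP_ode_aux (n N : ℕ) :
    ∑ k ∈ Finset.range N, C (lagA n k) * (X * derivative (derivative (lagQ k)) +
      X * derivative (lagQ k) + C ((n : ℂ) + 1) * lagQ k)
    = ∑ k ∈ Finset.range N, C (lagA n k) * (C (2 * (k : ℂ) + 1) * X ^ k)
      - C ((N : ℂ) * (N + 1) * lagA n N) * lagQ (N - 1) := by
  induction N with
  | zero => simp
  | succ N ih =>
    rw [Finset.sum_range_succ, Finset.sum_range_succ, ih]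
    have h := congrArg (C : ℂ → ℂ[X]) (lagA_succ n N)
    have hq := lagQ_ode N
    simp only [Nat.add_sub_cancel]
    push_cast
    simp only [map_add, map_mul, map_sub, map_neg, map_one, map_natCast, map_ofNat] at h hq ⊢
    linear_combination (C (lagA n N)) * hq + lagQ N * h

open Polynomial in
lemma lagP_ode (n : ℕ) :
    X * derivative (derivative (lagP n)) + X * derivative (lagP n) + C ((n : ℂ) + 1) * lagP n
      = 2 * X * derivative (lagL n) + lagL n := by
  have h := lagP_ode_aux n (n + 1)
  rw [lagA_zero_of_gt n (n + 1) (by omega)] at h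
  simp only [mul_zero, map_zero, zero_mul, sub_zero] at h
  have e1 : X * derivative (derivative (lagP n)) + X * derivative (lagP n)
      + C ((n : ℂ) + 1) * lagP n = ∑ k ∈ Finset.range (n + 1), C (lagA n k) *
      (X * derivative (derivative (lagQ k)) +
      X * derivative (lagQ k) + C ((n : ℂ) + 1) * lagQ k) := by
    unfold lagP
    simp only [derivative_sum, derivative_C_mul, Finset.mul_sum, ← Finset.sum_add_distrib]
    refine Finset.sum_congr rfl fun k hk => ?_
    ring
  rw [e1, h]
  unfold lagL
  simp only [derivative_sum, derivative_C_mul, Finset.mul_sum, ← Finset.sum_add_distrib]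
  refine Finset.sum_congr rfl fun k hk => ?_
  cases k with
  | zero => simp
  | succ k =>
    simp only [derivative_X_pow, Nat.add_sub_cancel]
    simp only [map_add, map_mul, map_one, map_natCast, map_ofNat, pow_succ]
    push_cast
    ring

lemma lagL_zero (n : ℕ) : (lagL n).eval 0 = (n : ℂ) + 1 := by
  rw [← Polynomial.coeff_zero_eq_eval_zero, lagL_coeff]
  simp [lagA]

lemma lagP_zero (n : ℕ) : (lagP n).eval 0 ≠ 0 := by
  intro h
  have := congrArg (Polynomial.eval 0) (lagP_ode n)
  simp [h, lagL_zero] at this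
  have h2 : ((n : ℂ) + 1) ≠ 0 := by exact_mod_cast Nat.succ_ne_zero n
  exact h2 this.symm

lemma poly_zero_of_left (p : Polynomial ℂ) (h : ∀ z : ℂ, z.re < 0 → p.eval z = 0) : p = 0 := by
  refine Polynomial.eq_zero_of_infinite_isRoot p (Set.Infinite.mono (s := Set.range
    fun k : ℕ => (-(k + 1 : ℂ))) ?_ (Set.infinite_range_of_injective ?_))
  · rintro _ ⟨k, rfl⟩
    apply h
    simp only [Complex.neg_re, Complex.add_re, Complex.natCast_re, Complex.one_re]
    have : (0 : ℝ) ≤ k := Nat.cast_nonneg k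
    linarith
  · intro a b hab
    simpa using hab

lemma E1_hasDerivAt (ζ : ℂ) (hζ : 0 < ζ.re) : HasDerivAt E1 (-Complex.exp (-ζ) / ζ) ζ := by
  have hr : 0 < ζ.re / 2 := by linarith
  have hmeas : ∀ z : ℂ, AEStronglyMeasurable
      (fun t : ℝ => Complex.exp (-(t : ℂ) * z) / (t : ℂ)) (volume.restrict (Ioi (1:ℝ))) := by
    intro z
    apply Measurable.aestronglyMeasurable
    fun_prop
  have hint : Integrable (fun t : ℝ => Real.exp (-(ζ.re / 2) * t))
      (volume.restrict (Ioi (1:ℝ))) := exp_neg_integrableOn_Ioi 1 hr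
  have hre : ∀ x ∈ Metric.ball ζ (ζ.re / 2), ζ.re / 2 ≤ x.re := by
    intro x hx
    rw [Metric.mem_ball, dist_eq_norm] at hx
    have := (Complex.abs_re_le_norm (x - ζ)).trans_lt hx
    rw [Complex.sub_re, abs_lt] at this
    linarith [this.1]
  have hbd : ∀ t : ℝ, 1 < t → ∀ x : ℂ, ζ.re / 2 ≤ x.re →
      ‖Complex.exp (-(t : ℂ) * x)‖ ≤ Real.exp (-(ζ.re / 2) * t) := by
    intro t ht x hx
    rw [Complex.norm_exp]
    apply Real.exp_le_exp.mpr
    simp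
    nlinarith
  have key := hasDerivAt_integral_of_dominated_loc_of_deriv_le
    (μ := volume.restrict (Ioi (1:ℝ)))
    (F := fun (z : ℂ) (t : ℝ) => Complex.exp (-(t : ℂ) * z) / (t : ℂ))
    (F' := fun (z : ℂ) (t : ℝ) => -Complex.exp (-(t : ℂ) * z))
    (x₀ := ζ) (s := Metric.ball ζ (ζ.re / 2))
    (bound := fun t : ℝ => Real.exp (-(ζ.re / 2) * t))
    (Metric.ball_mem_nhds ζ hr)
    (Filter.Eventually.of_forall hmeas)
    (by
      refine hint.mono' (hmeas ζ) ?_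
      filter_upwards [ae_restrict_mem measurableSet_Ioi] with t ht
      have ht : 1 < t := ht
      rw [norm_div]
      refine (div_le_self (norm_nonneg _) ?_).trans (hbd t ht ζ (by linarith))
      rw [Complex.norm_real, Real.norm_eq_abs]
      exact ht.le.trans (le_abs_self t))
    (by
      apply Measurable.aestronglyMeasurable
      fun_prop)
    (by
      filter_upwards [ae_restrict_mem measurableSet_Ioi] with t ht x hx
      rw [norm_neg]
      exact hbd t ht x (hre x hx))
    hint
    (by
      filter_upwards [ae_restrict_mem measurableSet_Ioi] with t ht x hx
      have ht : 1 < t := ht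
      have ht0 : (t : ℂ) ≠ 0 := by
        have : t ≠ 0 := by linarith
        exact_mod_cast this
      have := (((hasDerivAt_id x).const_mul (-(t : ℂ))).cexp).div_const (t : ℂ)
      refine this.congr_deriv ?_
      simp only [id]
      field_simp)
  have h2 := key.2
  have hval : ∫ t in Ioi (1:ℝ), -Complex.exp (-(t : ℂ) * ζ) = -Complex.exp (-ζ) / ζ := by
    have := integral_exp_mul_complex_Ioi (a := -ζ) (by simpa using hζ) 1
    rw [integral_neg]
    have e : ∀ t : ℝ, -(t : ℂ) * ζ = -ζ * (t : ℂ) := fun t => by ring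
    simp_rw [e, this]
    simp
    ring
  rw [hval] at h2
  exact h2

lemma E1neg_hasDerivAt (ξ : ℂ) (h : ξ.re < 0) :
    HasDerivAt (fun z => E1 (-z)) (-Complex.exp ξ / ξ) ξ := by
  have h1 := E1_hasDerivAt (-ξ) (by simpa using h)
  have := h1.comp ξ (hasDerivAt_neg ξ)
  refine this.congr_deriv ?_
  rw [neg_neg, div_neg]
  ring

noncomputable def vsolD (n : ℕ) (z : ℂ) : ℂ :=
  ((lagP n).derivative.eval z + (lagP n).eval z - (lagL n).eval z) * (Complex.exp z / z)
    - (lagP n).eval z * (Complex.exp z / z / z) + (lagL n).derivative.eval z * E1 (-z)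

lemma vsol_eq (n : ℕ) : vsol n =
    fun z => (lagP n).eval z * (Complex.exp z / z) + (lagL n).eval z * E1 (-z) := by
  funext z
  unfold vsol
  rw [laguerre_eq, Pn_eq, mul_div_assoc]

lemma G_hasDerivAt (ξ : ℂ) (h0 : ξ ≠ 0) : HasDerivAt (fun z => Complex.exp z / z)
    (Complex.exp ξ / ξ - Complex.exp ξ / ξ / ξ) ξ := by
  refine ((Complex.hasDerivAt_exp ξ).div (hasDerivAt_id ξ) h0).congr_deriv ?_
  simp only [id]
  field_simp

lemma vsol_hasDerivAt (n : ℕ) (ξ : ℂ) (h : ξ.re < 0) : HasDerivAt (vsol n) (vsolD n ξ) ξ := by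
  have h0 : ξ ≠ 0 := by rintro rfl; simp at h
  rw [vsol_eq]
  refine ((((lagP n).hasDerivAt ξ).mul (G_hasDerivAt ξ h0)).add
    (((lagL n).hasDerivAt ξ).mul (E1neg_hasDerivAt ξ h))).congr_deriv ?_
  unfold vsolD
  ring

/-- The function v satisfies the Laguerre equation ξv'' + (2-ξ)v' + nv = 0 on Re ξ < 0,
and is linearly independent of L_n^{(1)}. -/
theorem vsol_solves_laguerre (n : ℕ) :
    (∀ ξ : ℂ, ξ.re < 0 →
        ξ * deriv (deriv (vsol n)) ξ + (2 - ξ) * deriv (vsol n) ξ + (n : ℂ) * vsol n ξ = 0) ∧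
    (∀ c₁ c₂ : ℂ,
        (∀ ξ : ℂ, ξ.re < 0 → c₁ * vsol n ξ + c₂ * laguerre 1 n ξ = 0) → c₁ = 0 ∧ c₂ = 0) := by
  have hev : ∀ ξ : ℂ, ξ.re < 0 → ∀ᶠ z in nhds ξ, z.re < 0 := fun ξ hξ =>
    (isOpen_lt Complex.continuous_re continuous_const).mem_nhds hξ
  constructor
  · intro ξ h
    have h0 : ξ ≠ 0 := by rintro rfl; simp at h
    have hd : deriv (vsol n) =ᶠ[nhds ξ] vsolD n := by
      filter_upwards [hev ξ h] with z hz
      exact (vsol_hasDerivAt n z hz).deriv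
    have hG := G_hasDerivAt ξ h0
    have hG2 : HasDerivAt (fun z => Complex.exp z / z / z)
        (Complex.exp ξ / ξ / ξ - 2 * (Complex.exp ξ / ξ / ξ / ξ)) ξ := by
      refine (hG.div (hasDerivAt_id ξ) h0).congr_deriv ?_
      simp only [id]
      field_simp
      ring
    have hE := E1neg_hasDerivAt ξ h
    have hD := ((((((lagP n).derivative.hasDerivAt ξ).add ((lagP n).hasDerivAt ξ)).sub
      ((lagL n).hasDerivAt ξ)).mul hG).sub (((lagP n).hasDerivAt ξ).mul hG2)).add
      (((lagL n).derivative.hasDerivAt ξ).mul hE)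
    have hD' : deriv (vsolD n) ξ = _ := HasDerivAt.deriv hD
    rw [hd.deriv_eq, hD', hd.eq_of_nhds, vsol_eq]
    have o1 := congrArg (Polynomial.eval ξ) (lagL_ode n)
    have o2 := congrArg (Polynomial.eval ξ) (lagP_ode n)
    simp only [Polynomial.eval_add, Polynomial.eval_mul, Polynomial.eval_sub, Polynomial.eval_X,
      Polynomial.eval_C, Polynomial.eval_ofNat, Polynomial.eval_zero] at o1 o2
    unfold vsolD
    simp only [Pi.add_apply, Pi.sub_apply, neg_div]
    have w1 : Complex.exp ξ / ξ = ξ ^ 2 * (Complex.exp ξ / ξ / ξ / ξ) := by field_simp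
    have w2 : Complex.exp ξ / ξ / ξ = ξ * (Complex.exp ξ / ξ / ξ / ξ) := by field_simp
    generalize Complex.exp ξ / ξ / ξ / ξ = w at *
    simp only [w2]
    simp only [w1]
    generalize Polynomial.eval ξ (Polynomial.derivative (Polynomial.derivative (lagL n))) = L2 at *
    generalize Polynomial.eval ξ (Polynomial.derivative (Polynomial.derivative (lagP n))) = P2 at *
    generalize Polynomial.eval ξ (Polynomial.derivative (lagL n)) = L1 at *
    generalize Polynomial.eval ξ (Polynomial.derivative (lagP n)) = P1 at *
    generalize Polynomial.eval ξ (lagL n) = L at *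
    generalize Polynomial.eval ξ (lagP n) = P at *
    generalize E1 (-ξ) = F at *
    linear_combination F * o1 + ξ ^ 2 * w * o2
  · intro c₁ c₂ H
    have hn : ((n : ℂ) + 1) ≠ 0 := by exact_mod_cast Nat.succ_ne_zero n
    have hc1 : c₁ = 0 := by
      by_contra hc
      have hz : Polynomial.X * (lagL n * (lagP n).derivative + lagL n * lagP n
          - lagL n * lagL n - (lagL n).derivative * lagP n) - lagL n * lagP n = 0 := by
        apply poly_zero_of_left
        intro ξ h
        have h0 : ξ ≠ 0 := by rintro rfl; simp at h
        have e1 := H ξ h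
        have e2 : c₁ * vsolD n ξ + c₂ * (lagL n).derivative.eval ξ = 0 := by
          have hd := ((vsol_hasDerivAt n ξ h).const_mul c₁).add
            (((lagL n).hasDerivAt ξ).const_mul c₂)
          have hz : HasDerivAt (fun _ : ℂ => (0 : ℂ)) 0 ξ := hasDerivAt_const ξ 0
          refine (hd.congr_of_eventuallyEq ?_).unique hz
          filter_upwards [hev ξ h] with z hz
          have := H z hz
          rw [laguerre_eq] at this
          simpa using this.symm
        rw [laguerre_eq, vsol_eq] at e1
        unfold vsolD at e2
        beta_reduce at e1
        simp only [Polynomial.eval_add, Polynomial.eval_mul, Polynomial.eval_sub,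
          Polynomial.eval_X]
        have he := Complex.exp_ne_zero ξ
        have hne : c₁ * (Complex.exp ξ / ξ / ξ) ≠ 0 :=
          mul_ne_zero hc (div_ne_zero (div_ne_zero he h0) h0)
        refine (mul_eq_zero.mp ?_).resolve_left hne
        have e3 : Complex.exp ξ / ξ = ξ * (Complex.exp ξ / ξ / ξ) := by field_simp
        generalize Complex.exp ξ / ξ / ξ = g at *
        rw [e3] at e1 e2
        linear_combination (lagL n).eval ξ * e2 - (lagL n).derivative.eval ξ * e1
      have := congrArg (Polynomial.eval 0) hz
      simp [lagL_zero, hn, lagP_zero] at this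
    refine ⟨hc1, ?_⟩
    subst hc1
    have hz : Polynomial.C c₂ * lagL n = 0 := by
      apply poly_zero_of_left
      intro ξ h
      have := H ξ h
      rw [laguerre_eq] at this
      simpa using this
    have := congrArg (Polynomial.eval 0) hz
    simpa [lagL_zero, hn] using this
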